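/- arXiv:1403.4967 — 2 statements merged into one kernel-verified Lean document; each statement's English description precedes it below -/
import Mathlib

section
/- Let $(S,\mathcal L)$ be a linear space: $\mathcal L$ is a nonempty family of subsets of $S$ (lines), each with at least three points, and any two distinct points $a,b\in S$ lie on exactly one line, denoted $m(a,b)$. For $a\in S$ and $m\subseteq S$ put $a+m=\{a+x : x\in m\}$ and $2m=\{2x : x\in m\}$, where $a+x$ is the two-element multiset consisting of $a$ and $x$, and $2x=x+x$. The Veronese space $V_2(S,\mathcal L)$ has as points all two-element multisets in $S$, and as blocks all sets $a+m$ and $2m$ with $a\in S$, $m\in\mathcal L$. Its leaves are the sets $a+S$ ($a\in S$) and $2S$; every block $B$ lies in a unique leaf $T(B)$. Two points are adjacent if some block contains both. Let $L_1,K_1,L_2,K_2$ be blocks of $V_2(S,\mathcal L)$ in pairwise distinct leaves which form a quadrangle without diagonals, i.e. there are pairwise distinct points $p_1\in L_1\cap K_1$, $p_2\in K_1\cap L_2$, $p_3\in L_2\cap K_2$, $p_4\in K_2\cap L_1$ such that $p_1,p_3$ are not adjacent and $p_2,p_4$ are not adjacent. Let $K$ be a block that meets both $L_1$ and $L_2$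 and satisfies $T(K)\neq T(L_1)$ and $T(K)\neq T(L_2)$. Then one of the following holds: 1. $L_1=a+m$ and $L_2=b+m$ for distinct points $a,b\in S$ and a line $m\in\mathcal L$, and either $K=x+m(a,b)$ for some $x\in m$, or $a,b\in m$ and $K=2m$; 2. $\{L_1,L_2\}=\{2n,\;c+n\}$ (in either order) for a line $n\in\mathcal L$ and a point $c\in S$, and $K=x+m(x,c)$ for some $x\in n$ with $x\neq c$; 3. $L_1=a+m_1$ and $L_2=b+m_2$ for distinct points $a,b\in S$ and distinct lines $m_1,m_2\in\mathcal L$ sharing a point $c$, and $K=2\,m(a,b)$ or $K=c+m(a,b)$. -/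
/-- `B` has at least three elements. -/
def AtLeastThree {α : Type*} (B : Set α) : Prop :=
  ∃ a b c, a ∈ B ∧ b ∈ B ∧ c ∈ B ∧ a ≠ b ∧ a ≠ c ∧ b ≠ c

/-- `(α, L)` is a partial linear space. -/
def IsPLS {α : Type*} (L : Set (Set α)) : Prop :=
  L.Nonempty ∧ (∀ B ∈ L, AtLeastThree B) ∧
    ∀ p q : α, p ≠ q → ∀ B₁ ∈ L, ∀ B₂ ∈ L,
      p ∈ B₁ → q ∈ B₁ → p ∈ B₂ → q ∈ B₂ → B₁ = B₂

/-- `(α, L)` is a linear space. -/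
def IsLinearSpace {α : Type*} (L : Set (Set α)) : Prop :=
  IsPLS L ∧ ∀ p q : α, p ≠ q → ∃ B ∈ L, p ∈ B ∧ q ∈ B

/-- The set `{e + r·x : x ∈ B}` of multisets. -/
def veroBlock {S : Type*} (e : Multiset S) (r : ℕ) (B : Set S) : Set (Multiset S) :=
  { m | ∃ x ∈ B, m = e + Multiset.replicate r x }

/-- The blocks of the Veronese space of level `k` over `(S, L)`; its points are the multisets of
cardinality `k` in `S`, and all elements of blocks are such multisets. -/
def veroBlocks {S : Type*} (k : ℕ) (L : Set (Set S)) : Set (Set (Multiset S)) :=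
  { Bl | ∃ (r : ℕ) (e : Multiset S) (B : Set S),
      0 < r ∧ r ≤ k ∧ Multiset.card e = k - r ∧ B ∈ L ∧ Bl = veroBlock e r B }

/-- The leaves `e + r·S`, i.e. the blocks of the Veronese space over `(S, {S})`. -/
def veroLeaves (S : Type*) (k : ℕ) : Set (Set (Multiset S)) :=
  veroBlocks k {(Set.univ : Set S)}

/-- Two points are adjacent if some block contains both. -/
def VerAdj {S : Type*} (k : ℕ) (L : Set (Set S)) (f g : Multiset S) : Prop :=
  ∃ Bl ∈ veroBlocks k L, f ∈ Bl ∧ g ∈ Bl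

/-- `T` is a leaf containing `B` (for a block `B` of a Veronese space over a partial linear space
there is exactly one such `T`). -/
def IsLeafOf {S : Type*} (k : ℕ) (T B : Set (Multiset S)) : Prop :=
  T ∈ veroLeaves S k ∧ B ⊆ T

/-- The leaves of the blocks `B` and `B'` are different. -/
def DifferentLeaves {S : Type*} (k : ℕ) (B B' : Set (Multiset S)) : Prop :=
  ∃ T T' : Set (Multiset S), IsLeafOf k T B ∧ IsLeafOf k T' B' ∧ T ≠ T'

/-- The blocks `L₁, K₁, L₂, K₂` are, in this cyclic order, the sides of a quadrangle without
diagonals. -/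
def IsQuadrangleWithoutDiagonals {S : Type*} (k : ℕ) (L : Set (Set S))
    (L₁ K₁ L₂ K₂ : Set (Multiset S)) : Prop :=
  ∃ p₁ p₂ p₃ p₄ : Multiset S,
    p₁ ∈ L₁ ∩ K₁ ∧ p₂ ∈ K₁ ∩ L₂ ∧ p₃ ∈ L₂ ∩ K₂ ∧ p₄ ∈ K₂ ∩ L₁ ∧
    (p₁ ≠ p₂ ∧ p₁ ≠ p₃ ∧ p₁ ≠ p₄ ∧ p₂ ≠ p₃ ∧ p₂ ≠ p₄ ∧ p₃ ≠ p₄) ∧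
    ¬ VerAdj k L p₁ p₃ ∧ ¬ VerAdj k L p₂ p₄

/-- A proper quadrangle: a quadrangle without diagonals with sides in pairwise distinct leaves. -/
def IsProperQuadrangle {S : Type*} (k : ℕ) (L : Set (Set S))
    (L₁ K₁ L₂ K₂ : Set (Multiset S)) : Prop :=
  (L₁ ∈ veroBlocks k L ∧ K₁ ∈ veroBlocks k L ∧ L₂ ∈ veroBlocks k L ∧ K₂ ∈ veroBlocks k L) ∧
  (DifferentLeaves k L₁ K₁ ∧ DifferentLeaves k L₁ L₂ ∧ DifferentLeaves k L₁ K₂ ∧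
    DifferentLeaves k K₁ L₂ ∧ DifferentLeaves k K₁ K₂ ∧ DifferentLeaves k L₂ K₂) ∧
  IsQuadrangleWithoutDiagonals k L L₁ K₁ L₂ K₂

/-- The set `a + m`. -/
def addPt {S : Type*} (a : S) (m : Set S) : Set (Multiset S) :=
  { t | ∃ x ∈ m, t = ({a, x} : Multiset S) }

/-- The set `2m`. -/
def dbl {S : Type*} (m : Set S) : Set (Multiset S) :=
  { t | ∃ x ∈ m, t = ({x, x} : Multiset S) }

/-!
Blocks in distinct leaves meet in at most one point, determined by the leaves. Hence a block that
meets `L₁ = a + m₁` and `L₂ = b + m₂` from outside their leaves is `c + k` with `c ∈ m₁ ∩ m₂`, or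
`2k`, where `k` is a line through `a` and `b`; if `L₁ = 2n` and `L₂ = c + m`, it is `x + k` with
`x ∈ m ∩ n` and `k` a line through `x` and `c`. Two such blocks in distinct leaves, `K₁` and `K₂`,
thus force `m₁` and `m₂` to meet, because only one of the two can lie in the leaf `2S`; and they
force `m = n`, because they provide two points of `m ∩ n`.
-/

section Blocks

variable {S : Type*} {a b x y : S} {m n : Set S} {T B B' : Set (Multiset S)}

theorem AtLeastThree.nontrivial (h : AtLeastThree m) : m.Nontrivial := by
  obtain ⟨x, y, -, hx, hy, -, hxy, -, -⟩ := h
  exact ⟨x, hx, y, hy, hxy⟩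

theorem IsPLS.nontrivial {ℒ : Set (Set S)} (hℒ : IsPLS ℒ) : ∀ m ∈ ℒ, m.Nontrivial :=
  fun m hm ↦ (hℒ.2.1 m hm).nontrivial

theorem IsPLS.eq_of_mem {ℒ : Set (Set S)} (hℒ : IsPLS ℒ) (hm : m ∈ ℒ) (hn : n ∈ ℒ) (hxy : x ≠ y)
    (hxm : x ∈ m) (hym : y ∈ m) (hxn : x ∈ n) (hyn : y ∈ n) : m = n :=
  hℒ.2.2 x y hxy m hm n hn hxm hym hxn hyn

theorem multiset_pair_eq_pair_iff :
    ({a, b} : Multiset S) = {x, y} ↔ a = x ∧ b = y ∨ a = y ∧ b = x := by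
  simp only [Multiset.insert_eq_cons, Multiset.cons_eq_cons, Multiset.singleton_inj,
    Multiset.singleton_eq_cons_iff]
  grind

theorem pair_mem_addPt_iff : ({x, y} : Multiset S) ∈ addPt a m ↔ x = a ∧ y ∈ m ∨ y = a ∧ x ∈ m := by
  simp only [addPt, Set.mem_ofPred_eq, multiset_pair_eq_pair_iff]
  grind

theorem pair_mem_dbl_iff : ({x, y} : Multiset S) ∈ dbl m ↔ x = y ∧ x ∈ m := by
  simp only [dbl, Set.mem_ofPred_eq, multiset_pair_eq_pair_iff]
  grind

theorem addPt_inter_addPt_nonempty_iff (hab : a ≠ b) :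
    (addPt a m ∩ addPt b n).Nonempty ↔ b ∈ m ∧ a ∈ n := by
  constructor
  · rintro ⟨_, ⟨x, hx, rfl⟩, h⟩
    rcases pair_mem_addPt_iff.1 h with ⟨rfl, -⟩ | ⟨rfl, ha⟩
    · exact absurd rfl hab
    · exact ⟨hx, ha⟩
  · rintro ⟨hb, ha⟩
    exact ⟨{a, b}, pair_mem_addPt_iff.2 (.inl ⟨rfl, hb⟩), pair_mem_addPt_iff.2 (.inr ⟨rfl, ha⟩)⟩

theorem dbl_inter_addPt_nonempty_iff : (dbl m ∩ addPt a n).Nonempty ↔ a ∈ m ∧ a ∈ n := by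
  constructor
  · rintro ⟨_, ⟨x, hx, rfl⟩, h⟩
    obtain ⟨rfl, hn⟩ := or_self_iff.1 (pair_mem_addPt_iff.1 h)
    exact ⟨hx, hn⟩
  · rintro ⟨hm, hn⟩
    exact ⟨{a, a}, pair_mem_dbl_iff.2 ⟨rfl, hm⟩, pair_mem_addPt_iff.2 (.inl ⟨rfl, hn⟩)⟩

theorem veroBlock_singleton_one (a : S) (m : Set S) : veroBlock {a} 1 m = addPt a m := by
  simp only [veroBlock, addPt, Multiset.replicate_one, Multiset.singleton_add,
    Multiset.insert_eq_cons]

theorem veroBlock_zero_two (m : Set S) : veroBlock 0 2 m = dbl m := by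
  simp only [veroBlock, dbl, zero_add, Multiset.replicate_succ, Multiset.replicate_zero,
    Multiset.cons_zero, Multiset.insert_eq_cons]

theorem mem_veroBlocks_two_iff {ℒ : Set (Set S)} :
    B ∈ veroBlocks 2 ℒ ↔ (∃ a, ∃ m ∈ ℒ, B = addPt a m) ∨ ∃ m ∈ ℒ, B = dbl m := by
  constructor
  · rintro ⟨r, e, m, hr₀, hr₂, he, hm, rfl⟩
    obtain rfl | rfl : r = 1 ∨ r = 2 := by lia
    · obtain ⟨a, rfl⟩ := Multiset.card_eq_one.1 he
      exact .inl ⟨a, m, hm, veroBlock_singleton_one a m⟩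
    · obtain rfl := Multiset.card_eq_zero.1 he
      exact .inr ⟨m, hm, veroBlock_zero_two m⟩
  · rintro (⟨a, m, hm, rfl⟩ | ⟨m, hm, rfl⟩)
    · exact ⟨1, {a}, m, one_pos, one_le_two, rfl, hm, (veroBlock_singleton_one a m).symm⟩
    · exact ⟨2, 0, m, two_pos, le_rfl, rfl, hm, (veroBlock_zero_two m).symm⟩

theorem mem_veroLeaves_two_iff :
    T ∈ veroLeaves S 2 ↔ (∃ a, T = addPt a Set.univ) ∨ T = dbl Set.univ := by
  simp only [veroLeaves, mem_veroBlocks_two_iff, Set.mem_singleton_iff, exists_eq_left]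

theorem IsLeafOf.eq_addPt_univ (hm : m.Nontrivial) (hT : IsLeafOf 2 T (addPt a m)) :
    T = addPt a Set.univ := by
  obtain ⟨x, hx, y, hy, hxy⟩ := hm
  have hxT : {a, x} ∈ T := hT.2 ⟨x, hx, rfl⟩
  have hyT : {a, y} ∈ T := hT.2 ⟨y, hy, rfl⟩
  rcases mem_veroLeaves_two_iff.1 hT.1 with ⟨b, rfl⟩ | rfl
  · rw [pair_mem_addPt_iff] at hxT hyT
    grind
  · rw [pair_mem_dbl_iff] at hxT hyT
    exact absurd (hxT.1.symm.trans hyT.1) hxy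

theorem IsLeafOf.eq_dbl_univ (hm : m.Nontrivial) (hT : IsLeafOf 2 T (dbl m)) :
    T = dbl Set.univ := by
  obtain ⟨x, hx, y, hy, hxy⟩ := hm
  have hxT : {x, x} ∈ T := hT.2 ⟨x, hx, rfl⟩
  have hyT : {y, y} ∈ T := hT.2 ⟨y, hy, rfl⟩
  rcases mem_veroLeaves_two_iff.1 hT.1 with ⟨b, rfl⟩ | rfl
  · rw [pair_mem_addPt_iff, or_self_iff] at hxT hyT
    exact absurd (hxT.1.trans hyT.1.symm) hxy
  · rfl

theorem DifferentLeaves.symm {k : ℕ} (h : DifferentLeaves k B B') : DifferentLeaves k B' B := by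
  obtain ⟨T, T', hT, hT', hne⟩ := h
  exact ⟨T', T, hT', hT, hne.symm⟩

theorem DifferentLeaves.ne_of_addPt (h : DifferentLeaves 2 (addPt a m) (addPt b n))
    (hm : m.Nontrivial) (hn : n.Nontrivial) : a ≠ b := by
  rintro rfl
  obtain ⟨T, T', hT, hT', hne⟩ := h
  exact hne ((hT.eq_addPt_univ hm).trans (hT'.eq_addPt_univ hn).symm)

theorem not_differentLeaves_dbl_dbl (hm : m.Nontrivial) (hn : n.Nontrivial) :
    ¬ DifferentLeaves 2 (dbl m) (dbl n) := by
  rintro ⟨T, T', hT, hT', hne⟩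
  exact hne ((hT.eq_dbl_univ hm).trans (hT'.eq_dbl_univ hn).symm)

end Blocks

/-- `K` is a transversal of `L₁` and `L₂`: a block of `V₂(S, ℒ)` that meets both from outside their
leaves. In a proper quadrangle two opposite sides are transversals of the other two. -/
structure IsTransversal {S : Type*} (ℒ : Set (Set S)) (L₁ L₂ K : Set (Multiset S)) : Prop where
  mem_veroBlocks : K ∈ veroBlocks 2 ℒ
  inter_left : (K ∩ L₁).Nonempty
  inter_right : (K ∩ L₂).Nonempty
  leaf_left : DifferentLeaves 2 K L₁
  leaf_right : DifferentLeaves 2 K L₂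

namespace IsTransversal

variable {S : Type*} {ℒ : Set (Set S)} {a b c : S} {m m₁ m₂ n : Set S}
  {L₁ L₂ K K₁ K₂ : Set (Multiset S)}

theorem symm (hK : IsTransversal ℒ L₁ L₂ K) : IsTransversal ℒ L₂ L₁ K :=
  ⟨hK.mem_veroBlocks, hK.inter_right, hK.inter_left, hK.leaf_right, hK.leaf_left⟩

theorem eq_addPt_or_eq_dbl (hℒ : ∀ m ∈ ℒ, m.Nontrivial) (hm₁ : m₁ ∈ ℒ) (hm₂ : m₂ ∈ ℒ)
    (hK : IsTransversal ℒ (addPt a m₁) (addPt b m₂) K) :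
    ∃ k ∈ ℒ, a ∈ k ∧ b ∈ k ∧
      ((∃ x ∈ m₁ ∩ m₂, K = addPt x k) ∨ (a ∈ m₁ ∧ b ∈ m₂ ∧ K = dbl k)) := by
  obtain ⟨hK, h₁, h₂, hT₁, hT₂⟩ := hK
  rcases mem_veroBlocks_two_iff.1 hK with ⟨x, k, hk, rfl⟩ | ⟨k, hk, rfl⟩
  · have hxa : x ≠ a := hT₁.ne_of_addPt (hℒ k hk) (hℒ m₁ hm₁)
    have hxb : x ≠ b := hT₂.ne_of_addPt (hℒ k hk) (hℒ m₂ hm₂)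
    obtain ⟨hak, hxm₁⟩ := (addPt_inter_addPt_nonempty_iff hxa).1 h₁
    obtain ⟨hbk, hxm₂⟩ := (addPt_inter_addPt_nonempty_iff hxb).1 h₂
    exact ⟨k, hk, hak, hbk, .inl ⟨x, ⟨hxm₁, hxm₂⟩, rfl⟩⟩
  · obtain ⟨hak, ham₁⟩ := dbl_inter_addPt_nonempty_iff.1 h₁
    obtain ⟨hbk, hbm₂⟩ := dbl_inter_addPt_nonempty_iff.1 h₂
    exact ⟨k, hk, hak, hbk, .inr ⟨ham₁, hbm₂, rfl⟩⟩

theorem eq_addPt (hℒ : ∀ m ∈ ℒ, m.Nontrivial) (hn : n ∈ ℒ) (hm : m ∈ ℒ)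
    (hK : IsTransversal ℒ (dbl n) (addPt c m) K) :
    ∃ x ∈ n ∩ m, x ≠ c ∧ ∃ k ∈ ℒ, x ∈ k ∧ c ∈ k ∧ K = addPt x k := by
  obtain ⟨hK, h₁, h₂, hT₁, hT₂⟩ := hK
  rcases mem_veroBlocks_two_iff.1 hK with ⟨x, k, hk, rfl⟩ | ⟨k, hk, rfl⟩
  · have hxc : x ≠ c := hT₂.ne_of_addPt (hℒ k hk) (hℒ m hm)
    obtain ⟨hck, hxm⟩ := (addPt_inter_addPt_nonempty_iff hxc).1 h₂
    obtain ⟨hxn, hxk⟩ := dbl_inter_addPt_nonempty_iff.1 (Set.inter_comm _ _ ▸ h₁)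
    exact ⟨x, ⟨hxn, hxm⟩, hxc, k, hk, hxk, hck, rfl⟩
  · exact absurd hT₁ (not_differentLeaves_dbl_dbl (hℒ k hk) (hℒ n hn))

theorem lines_inter_nonempty (hℒ : ∀ m ∈ ℒ, m.Nontrivial) (hm₁ : m₁ ∈ ℒ) (hm₂ : m₂ ∈ ℒ)
    (hK₁ : IsTransversal ℒ (addPt a m₁) (addPt b m₂) K₁)
    (hK₂ : IsTransversal ℒ (addPt a m₁) (addPt b m₂) K₂) (hK : DifferentLeaves 2 K₁ K₂) :
    (m₁ ∩ m₂).Nonempty := by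
  obtain ⟨k₁, hk₁, -, -, ⟨x, hx, -⟩ | ⟨-, -, rfl⟩⟩ := hK₁.eq_addPt_or_eq_dbl hℒ hm₁ hm₂
  · exact ⟨x, hx⟩
  obtain ⟨k₂, hk₂, -, -, ⟨x, hx, -⟩ | ⟨-, -, rfl⟩⟩ := hK₂.eq_addPt_or_eq_dbl hℒ hm₁ hm₂
  · exact ⟨x, hx⟩
  exact absurd hK (not_differentLeaves_dbl_dbl (hℒ k₁ hk₁) (hℒ k₂ hk₂))

theorem lines_eq (hℒ : IsPLS ℒ) (hn : n ∈ ℒ) (hm : m ∈ ℒ)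
    (hK₁ : IsTransversal ℒ (dbl n) (addPt c m) K₁) (hK₂ : IsTransversal ℒ (dbl n) (addPt c m) K₂)
    (hK : DifferentLeaves 2 K₁ K₂) : n = m := by
  obtain ⟨x, ⟨hxn, hxm⟩, -, k₁, hk₁, -, -, rfl⟩ := hK₁.eq_addPt hℒ.nontrivial hn hm
  obtain ⟨y, ⟨hyn, hym⟩, -, k₂, hk₂, -, -, rfl⟩ := hK₂.eq_addPt hℒ.nontrivial hn hm
  have hxy : x ≠ y := hK.ne_of_addPt (hℒ.nontrivial k₁ hk₁) (hℒ.nontrivial k₂ hk₂)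
  exact hℒ.eq_of_mem hn hm hxy hxn hyn hxm hym

theorem eq_addPt_or_eq_dbl_of_same_line (hℒ : IsPLS ℒ) (hm : m ∈ ℒ) (hab : a ≠ b)
    (hK : IsTransversal ℒ (addPt a m) (addPt b m) K) :
    (∃ x ∈ m, ∃ k ∈ ℒ, a ∈ k ∧ b ∈ k ∧ K = addPt x k) ∨ (a ∈ m ∧ b ∈ m ∧ K = dbl m) := by
  obtain ⟨k, hk, hak, hbk, ⟨x, ⟨hx, -⟩, rfl⟩ | ⟨ha, hb, rfl⟩⟩ :=
    hK.eq_addPt_or_eq_dbl hℒ.nontrivial hm hm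
  · exact .inl ⟨x, hx, k, hk, hak, hbk, rfl⟩
  · obtain rfl : k = m := hℒ.eq_of_mem hk hm hab hak hbk ha hb
    exact .inr ⟨ha, hb, rfl⟩

theorem eq_dbl_or_eq_addPt_of_ne_lines (hℒ : IsPLS ℒ) (hm₁ : m₁ ∈ ℒ) (hm₂ : m₂ ∈ ℒ) (hm : m₁ ≠ m₂)
    (hc : c ∈ m₁ ∩ m₂) (hK : IsTransversal ℒ (addPt a m₁) (addPt b m₂) K) :
    ∃ k ∈ ℒ, a ∈ k ∧ b ∈ k ∧ (K = dbl k ∨ K = addPt c k) := by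
  obtain ⟨k, hk, hak, hbk, ⟨x, hx, rfl⟩ | ⟨-, -, rfl⟩⟩ :=
    hK.eq_addPt_or_eq_dbl hℒ.nontrivial hm₁ hm₂
  · obtain rfl : x = c := by
      by_contra hxc
      exact hm (hℒ.eq_of_mem hm₁ hm₂ hxc hx.1 hc.1 hx.2 hc.2)
    exact ⟨k, hk, hak, hbk, .inr rfl⟩
  · exact ⟨k, hk, hak, hbk, .inl rfl⟩

end IsTransversal

theorem stmt_6_general {S : Type*} {ℒ : Set (Set S)} (hℒ : IsPLS ℒ)
    {L₁ L₂ K₁ K₂ K : Set (Multiset S)} (hL₁ : L₁ ∈ veroBlocks 2 ℒ) (hL₂ : L₂ ∈ veroBlocks 2 ℒ)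
    (hL : DifferentLeaves 2 L₁ L₂) (hK₁ : IsTransversal ℒ L₁ L₂ K₁)
    (hK₂ : IsTransversal ℒ L₁ L₂ K₂) (hK₁₂ : DifferentLeaves 2 K₁ K₂)
    (hK : IsTransversal ℒ L₁ L₂ K) :
    (∃ a b : S, a ≠ b ∧ ∃ m ∈ ℒ, L₁ = addPt a m ∧ L₂ = addPt b m ∧
      ((∃ x ∈ m, ∃ mab ∈ ℒ, a ∈ mab ∧ b ∈ mab ∧ K = addPt x mab) ∨
       (a ∈ m ∧ b ∈ m ∧ K = dbl m))) ∨
    (∃ n ∈ ℒ, ∃ c : S,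
      ((L₁ = dbl n ∧ L₂ = addPt c n) ∨ (L₁ = addPt c n ∧ L₂ = dbl n)) ∧
      ∃ x ∈ n, x ≠ c ∧ ∃ mxc ∈ ℒ, x ∈ mxc ∧ c ∈ mxc ∧ K = addPt x mxc) ∨
    (∃ a b c : S, a ≠ b ∧ ∃ m₁ ∈ ℒ, ∃ m₂ ∈ ℒ, m₁ ≠ m₂ ∧ c ∈ m₁ ∧ c ∈ m₂ ∧
      L₁ = addPt a m₁ ∧ L₂ = addPt b m₂ ∧
      ∃ mab ∈ ℒ, a ∈ mab ∧ b ∈ mab ∧ (K = dbl mab ∨ K = addPt c mab)) := by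
  have hnt := hℒ.nontrivial
  rcases mem_veroBlocks_two_iff.1 hL₁ with ⟨a, m₁, hm₁, rfl⟩ | ⟨n₁, hn₁, rfl⟩ <;>
    rcases mem_veroBlocks_two_iff.1 hL₂ with ⟨b, m₂, hm₂, rfl⟩ | ⟨n₂, hn₂, rfl⟩
  · have hab : a ≠ b := hL.ne_of_addPt (hnt m₁ hm₁) (hnt m₂ hm₂)
    obtain rfl | hm := eq_or_ne m₁ m₂
    · exact .inl ⟨a, b, hab, m₁, hm₁, rfl, rfl, hK.eq_addPt_or_eq_dbl_of_same_line hℒ hm₁ hab⟩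
    · obtain ⟨c, hc⟩ := hK₁.lines_inter_nonempty hnt hm₁ hm₂ hK₂ hK₁₂
      exact .inr (.inr ⟨a, b, c, hab, m₁, hm₁, m₂, hm₂, hm, hc.1, hc.2, rfl, rfl,
        hK.eq_dbl_or_eq_addPt_of_ne_lines hℒ hm₁ hm₂ hm hc⟩)
  · obtain rfl := hK₁.symm.lines_eq hℒ hn₂ hm₁ hK₂.symm hK₁₂
    obtain ⟨x, ⟨hx, -⟩, hK⟩ := hK.symm.eq_addPt hnt hn₂ hn₂
    exact .inr (.inl ⟨n₂, hn₂, a, .inr ⟨rfl, rfl⟩, x, hx, hK⟩)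
  · obtain rfl := hK₁.lines_eq hℒ hn₁ hm₂ hK₂ hK₁₂
    obtain ⟨x, ⟨hx, -⟩, hK⟩ := hK.eq_addPt hnt hn₁ hn₁
    exact .inr (.inl ⟨n₁, hn₁, b, .inl ⟨rfl, rfl⟩, x, hx, hK⟩)
  · exact absurd hL (not_differentLeaves_dbl_dbl (hnt n₁ hn₁) (hnt n₂ hn₂))

theorem stmt_6 {S : Type*} (ℒ : Set (Set S)) (hL : IsLinearSpace ℒ)
    (L₁ K₁ L₂ K₂ : Set (Multiset S)) (hQ : IsProperQuadrangle 2 ℒ L₁ K₁ L₂ K₂)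
    (K : Set (Multiset S)) (hK : K ∈ veroBlocks 2 ℒ)
    (hKL₁ : (K ∩ L₁).Nonempty) (hKL₂ : (K ∩ L₂).Nonempty)
    (hT₁ : DifferentLeaves 2 K L₁) (hT₂ : DifferentLeaves 2 K L₂) :
    (∃ a b : S, a ≠ b ∧ ∃ m ∈ ℒ, L₁ = addPt a m ∧ L₂ = addPt b m ∧
      ((∃ x ∈ m, ∃ mab ∈ ℒ, a ∈ mab ∧ b ∈ mab ∧ K = addPt x mab) ∨
       (a ∈ m ∧ b ∈ m ∧ K = dbl m))) ∨
    (∃ n ∈ ℒ, ∃ c : S,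
      ((L₁ = dbl n ∧ L₂ = addPt c n) ∨ (L₁ = addPt c n ∧ L₂ = dbl n)) ∧
      ∃ x ∈ n, x ≠ c ∧ ∃ mxc ∈ ℒ, x ∈ mxc ∧ c ∈ mxc ∧ K = addPt x mxc) ∨
    (∃ a b c : S, a ≠ b ∧ ∃ m₁ ∈ ℒ, ∃ m₂ ∈ ℒ, m₁ ≠ m₂ ∧ c ∈ m₁ ∧ c ∈ m₂ ∧
      L₁ = addPt a m₁ ∧ L₂ = addPt b m₂ ∧
      ∃ mab ∈ ℒ, a ∈ mab ∧ b ∈ mab ∧ (K = dbl mab ∨ K = addPt c mab)) := by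
  obtain ⟨⟨hL₁, hK₁, hL₂, hK₂⟩, ⟨hL₁K₁, hL₁L₂, hL₁K₂, hK₁L₂, hK₁K₂, hL₂K₂⟩,
    p₁, p₂, p₃, p₄, hp₁, hp₂, hp₃, hp₄, -⟩ := hQ
  exact stmt_6_general hL.1 hL₁ hL₂ hL₁L₂
    ⟨hK₁, ⟨p₁, hp₁.symm⟩, ⟨p₂, hp₂⟩, hL₁K₁.symm, hK₁L₂⟩
    ⟨hK₂, ⟨p₄, hp₄⟩, ⟨p₃, hp₃.symm⟩, hL₁K₂.symm, hL₂K₂.symm⟩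
    hK₁K₂ ⟨hK, hKL₁, hKL₂, hT₁, hT₂⟩
end

section
/- Let $K$ be a field with $\operatorname{char} K\neq 2$, let $V$ be a $K$-vector space of (possibly infinite) dimension at least $3$, and let $\mathbb P(V)$ be the projective space whose points are the $1$-dimensional subspaces $\langle u\rangle$ of $V$ and whose lines are the sets of points contained in a $2$-dimensional subspace. For a point–line structure $\mathfrak M_0=(S,\mathcal L)$ and an integer $k\ge 0$, let the Veronese space $\mathbf V_k(\mathfrak M_0)$ have as points the multisets of size $k$ with elements in $S$, and as blocks the sets $\{e+r\cdot x : x\in B\}$ with $0<r\le k$, $e$ a multiset of size $k-r$ in $S$, and $B\in\mathcal L$. A hyperplane of a point–line structure is a proper subset $H$ of its points that meets every block and contains every block that has at least two points in $H$. Let $\xi$ be a nonzero, possibly degenerate, alternating bilinear form on $V$, and let $$H=\{\langle u\rangle+\langle v\rangle : u,v\in V\setminus\{0\},\ \xi(u,v)=0\}$$ be the set of points of $\mathbf V_2(\mathbb P(V))$ determined by it. Then $H$ is a hyperplane of $\mathbf V_2(\mathbb P(V))$. Moreover, let $\mathfrak A$ be the reduct whose points are the points of $\mathbf V_2(\mathbb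 P(V))$ not in $H$ and whose lines are the sets $L\setminus H$ for the blocks $L$ of $\mathbf V_2(\mathbb P(V))$ not contained in $H$. Then for every division ring $D$ with at least $3$ elements, every $D$-vector space $W$ and every integer $k\ge 0$, $\mathfrak A$ is not isomorphic to $\mathbf V_k(AG(W))$, where $AG(W)$ is the affine space with point set $W$ and with the cosets of the $1$-dimensional subspaces of $W$ as lines. Here an isomorphism is a bijection between the point sets that maps the set of lines of $\mathfrak A$ onto the set of blocks of $\mathbf V_k(AG(W))$. -/
/-- The points of the `k`-th Veronese space over a structure with point set `S`: the multisets of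
size `k` with elements in `S`. -/
def veroPoints (S : Type*) (k : ℕ) : Set (Multiset S) :=
  { m | Multiset.card m = k }

/-- `X` is closed under the blocks that have at least two points in it. -/
def IsSubspace {α : Type*} (Blk : Set (Set α)) (X : Set α) : Prop :=
  ∀ B ∈ Blk, (∃ p ∈ B ∩ X, ∃ q ∈ B ∩ X, p ≠ q) → B ⊆ X

/-- A hyperplane of a point-line structure with point set `P` and blocks `Blk`: a proper subspace
that meets every block. -/
def IsGeomHyperplane {α : Type*} (P : Set α) (Blk : Set (Set α)) (X : Set α) : Prop :=
  X ⊆ P ∧ X ≠ P ∧ IsSubspace Blk X ∧ ∀ B ∈ Blk, (B ∩ X).Nonempty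

/-- The lines of the reduct obtained by deleting the points of `H`. -/
def reductLines {α : Type*} (Blk : Set (Set α)) (H : Set α) : Set (Set α) :=
  { l | ∃ L ∈ Blk, ¬ L ⊆ H ∧ l = L \ H }

/-- Isomorphism of the point-line structures `(P, Blk)` and `(Q, Blk')`: a bijection from `P` onto
`Q` that maps the family `Blk` onto the family `Blk'`. -/
def GeomIsomorphic {α β : Type*} (P : Set α) (Blk : Set (Set α))
    (Q : Set β) (Blk' : Set (Set β)) : Prop :=
  ∃ φ : α → β, Set.BijOn φ P Q ∧ (fun l : Set α => φ '' l) '' Blk = Blk'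

/-- The lines of the projective space over `V`. -/
def projLines (K V : Type*) [Field K] [AddCommGroup V] [Module K V] :
    Set (Set (Projectivization K V)) :=
  { L | ∃ W : Submodule K V, Module.finrank K ↥W = 2 ∧
      L = { p : Projectivization K V | p.submodule ≤ W } }

/-- The set of the multisets `⟨u⟩ + ⟨v⟩` with `ξ u v = 0`. -/
def conjugatePairs {K V : Type*} [Field K] [AddCommGroup V] [Module K V]
    (ξ : V →ₗ[K] V →ₗ[K] K) : Set (Multiset (Projectivization K V)) :=
  { m | ∃ (u v : V) (hu : u ≠ 0) (hv : v ≠ 0), ξ u v = 0 ∧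
      m = ({Projectivization.mk K u hu, Projectivization.mk K v hv} :
        Multiset (Projectivization K V)) }

/-- The lines of the affine space over `W`: the cosets of the one-dimensional subspaces. -/
def agLines (D W : Type*) [DivisionRing D] [AddCommGroup W] [Module D W] : Set (Set W) :=
  { l | ∃ v w : W, w ≠ 0 ∧ l = { x : W | ∃ t : D, x = v + t • w } }

/-!
An isomorphism preserves the collinearity graph, and this graph already tells the spaces apart.

A point outside `H` is a pair `{p, q}` of distinct points with `ξ(p, q) ≠ 0`, and two such points
are collinear in the reduct exactly when they share an element: the collinearity graph is the line
graph of the non-orthogonality graph of `ξ`. Hence it has no induced claw. Moreover, if `dim V ≥ 3`,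
there is a path `p, x, y, q` whose consecutive points are non-orthogonal but whose ends are distinct
and orthogonal. Its outer edges are non-collinear with the common neighbour `{x, y}`, and an
opposite of `{x, y}` in a quadrangle through them could only be `{p, q}`, which lies in `H`.

Now consider `V_k` of a structure any two points of which are collinear. If `k ≥ 3` and there are
distinct points `x`, `y`, `z`, then `e + x + y + z` is the centre of a claw with ends
`e + x + 2 · y`, `e + y + 2 · z` and `e + z + 2 · x`. If `k = 2`, the collinearity graph is the line
graph of the complete graph on `S ∪ {∞}`, with `2 · x` as the edge `x∞`, and so opposites always
exist. In the remaining cases any two points are collinear.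
-/

open Projectivization
open scoped LinearAlgebra.Projectivization

section Collinearity

variable {α β : Type*} {Blk : Set (Set α)} {φ : α → β}

/-- Collinearity in a point-line structure. A point is collinear with itself exactly when it lies on
some block. -/
def AreCollinear (Blk : Set (Set α)) (p q : α) : Prop :=
  ∃ B ∈ Blk, p ∈ B ∧ q ∈ B

/-- The collinearity graph contains an induced claw `K₁,₃` with centre `m`. -/
def HasClaw (Blk : Set (Set α)) : Prop :=
  ∃ m a b c, AreCollinear Blk m a ∧ AreCollinear Blk m b ∧ AreCollinear Blk m c ∧
    ¬ AreCollinear Blk a b ∧ ¬ AreCollinear Blk b c ∧ ¬ AreCollinear Blk c a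

/-- Every common neighbour `p` of two non-collinear points `m` and `n` completes to an induced
quadrangle `m p n q` of the collinearity graph. -/
def CommonNeighborsHaveOpposites (Blk : Set (Set α)) : Prop :=
  ∀ m n p, AreCollinear Blk m p → AreCollinear Blk n p → ¬ AreCollinear Blk m n →
    ∃ q, AreCollinear Blk m q ∧ AreCollinear Blk n q ∧ ¬ AreCollinear Blk p q

theorem AreCollinear.symm {p q : α} : AreCollinear Blk p q → AreCollinear Blk q p :=
  fun ⟨B, hB, hp, hq⟩ => ⟨B, hB, hq, hp⟩

theorem AreCollinear.left_mem {p q : α} : AreCollinear Blk p q → p ∈ ⋃₀ Blk :=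
  fun ⟨B, hB, hp, _⟩ => ⟨B, hB, hp⟩

theorem AreCollinear.right_mem {p q : α} (h : AreCollinear Blk p q) : q ∈ ⋃₀ Blk :=
  h.symm.left_mem

theorem AreCollinear.of_pairwise [Nontrivial α] (h : Pairwise (AreCollinear Blk)) (p q : α) :
    AreCollinear Blk p q := by
  obtain rfl | hpq := eq_or_ne p q
  · obtain ⟨q, hq⟩ := exists_ne p
    obtain ⟨B, hB, hp, -⟩ := h hq.symm
    exact ⟨B, hB, hp, hp⟩
  · exact h hpq

theorem commonNeighborsHaveOpposites_of_pairwise {P : Set α} (hsub : ⋃₀ Blk ⊆ P)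
    (h : P.Pairwise (AreCollinear Blk)) : CommonNeighborsHaveOpposites Blk := by
  intro m n p hmp hnp hmn
  obtain rfl | hne := eq_or_ne m n
  · obtain ⟨B, hB, hm, -⟩ := hmp
    exact absurd ⟨B, hB, hm, hm⟩ hmn
  · exact absurd (h (hsub hmp.left_mem) (hsub hnp.left_mem) hne) hmn

theorem areCollinear_image_iff (hφ : Set.InjOn φ (⋃₀ Blk)) {p q : α} (hp : p ∈ ⋃₀ Blk)
    (hq : q ∈ ⋃₀ Blk) : AreCollinear (Set.image φ '' Blk) (φ p) (φ q) ↔ AreCollinear Blk p q := by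
  have mem_image_iff {x : α} (hx : x ∈ ⋃₀ Blk) {B : Set α} (hB : B ∈ Blk) : φ x ∈ φ '' B ↔ x ∈ B :=
    hφ.mem_image_iff (Set.subset_sUnion_of_mem hB) hx
  simp only [AreCollinear, Set.exists_mem_image]
  exact exists_congr fun B => and_congr_right fun hB =>
    and_congr (mem_image_iff hp hB) (mem_image_iff hq hB)

theorem exists_eq_of_mem_sUnion_image {y : β} (hy : y ∈ ⋃₀ (Set.image φ '' Blk)) :
    ∃ x ∈ ⋃₀ Blk, φ x = y := by
  rwa [← Set.image_sUnion] at hy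

theorem HasClaw.of_image (hφ : Set.InjOn φ (⋃₀ Blk)) (h : HasClaw (Set.image φ '' Blk)) :
    HasClaw Blk := by
  obtain ⟨m, a, b, c, hma, hmb, hmc, hab, hbc, hca⟩ := h
  obtain ⟨m, hm, rfl⟩ := exists_eq_of_mem_sUnion_image hma.left_mem
  obtain ⟨a, ha, rfl⟩ := exists_eq_of_mem_sUnion_image hma.right_mem
  obtain ⟨b, hb, rfl⟩ := exists_eq_of_mem_sUnion_image hmb.right_mem
  obtain ⟨c, hc, rfl⟩ := exists_eq_of_mem_sUnion_image hmc.right_mem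
  simp only [areCollinear_image_iff hφ, hm, ha, hb, hc] at hma hmb hmc hab hbc hca
  exact ⟨m, a, b, c, hma, hmb, hmc, hab, hbc, hca⟩

theorem CommonNeighborsHaveOpposites.of_image (hφ : Set.InjOn φ (⋃₀ Blk))
    (h : CommonNeighborsHaveOpposites (Set.image φ '' Blk)) : CommonNeighborsHaveOpposites Blk := by
  intro m n p hmp hnp hmn
  have hm := hmp.left_mem
  have hn := hnp.left_mem
  have hp := hmp.right_mem
  obtain ⟨q, hmq, hnq, hpq⟩ := h (φ m) (φ n) (φ p) ((areCollinear_image_iff hφ hm hp).2 hmp)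
    ((areCollinear_image_iff hφ hn hp).2 hnp) (mt (areCollinear_image_iff hφ hm hn).1 hmn)
  obtain ⟨q, hq, rfl⟩ := exists_eq_of_mem_sUnion_image hmq.right_mem
  simp only [areCollinear_image_iff hφ, hm, hn, hp, hq] at hmq hnq hpq
  exact ⟨q, hmq, hnq, hpq⟩

theorem areCollinear_reductLines_iff {H : Set α} {p q : α} :
    AreCollinear (reductLines Blk H) p q ↔ AreCollinear Blk p q ∧ p ∉ H ∧ q ∉ H := by
  constructor
  · rintro ⟨_, ⟨B, hB, -, rfl⟩, hp, hq⟩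
    exact ⟨⟨B, hB, hp.1, hq.1⟩, hp.2, hq.2⟩
  · rintro ⟨⟨B, hB, hp, hq⟩, hpH, hqH⟩
    exact ⟨_, ⟨B, hB, fun h => hpH (h hp), rfl⟩, ⟨hp, hpH⟩, hq, hqH⟩

theorem sUnion_reductLines_subset {H P : Set α} (hsub : ⋃₀ Blk ⊆ P) :
    ⋃₀ reductLines Blk H ⊆ P \ H := by
  rintro p ⟨_, ⟨B, hB, -, rfl⟩, hp, hpH⟩
  exact ⟨hsub ⟨B, hB, hp⟩, hpH⟩

end Collinearity

theorem multiset_pair_eq_pair_iff_s14 {α : Type*} {a b c d : α} :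
    ({a, b} : Multiset α) = {c, d} ↔ a = c ∧ b = d ∨ a = d ∧ b = c := by
  constructor
  · intro h
    obtain ⟨rfl, hbd⟩ | ⟨-, s, hb, hd⟩ := Multiset.cons_eq_cons.1 h
    · exact Or.inl ⟨rfl, Multiset.singleton_inj.1 hbd⟩
    · have hcb : c ∈ ({b} : Multiset α) := hb ▸ Multiset.mem_cons_self c s
      have had : a ∈ ({d} : Multiset α) := hd ▸ Multiset.mem_cons_self a s
      exact Or.inr ⟨Multiset.mem_singleton.1 had, (Multiset.mem_singleton.1 hcb).symm⟩
  · rintro (⟨rfl, rfl⟩ | ⟨rfl, rfl⟩)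
    · rfl
    · exact Multiset.pair_comm _ _

section Veronese

variable {S : Type*} {L : Set (Set S)} {k : ℕ}

theorem sUnion_veroBlocks_subset : ⋃₀ veroBlocks k L ⊆ veroPoints S k := by
  rintro m ⟨_, ⟨r, e, B, -, hrk, he, -, rfl⟩, x, -, rfl⟩
  rw [veroPoints, Set.mem_ofPred_eq, Multiset.card_add, Multiset.card_replicate, he,
    Nat.sub_add_cancel hrk]

theorem AreCollinear.add_replicate {x y : S} (hxy : AreCollinear L x y) {e : Multiset S} {r : ℕ}
    (hr : 0 < r) (hk : e.card + r = k) :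
    AreCollinear (veroBlocks k L) (e + Multiset.replicate r x) (e + Multiset.replicate r y) := by
  obtain ⟨B, hB, hx, hy⟩ := hxy
  exact ⟨_, ⟨r, e, B, hr, by omega, by omega, hB, rfl⟩, ⟨x, hx, rfl⟩, ⟨y, hy, rfl⟩⟩

theorem AreCollinear.cons {x y : S} (hxy : AreCollinear L x y) {e : Multiset S}
    (hk : e.card + 1 = k) : AreCollinear (veroBlocks k L) (x ::ₘ e) (y ::ₘ e) := by
  simpa only [Multiset.replicate_one, add_comm e, Multiset.singleton_add]
    using hxy.add_replicate one_pos hk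

theorem AreCollinear.eq_of_count_lt_count [DecidableEq S] {m n : Multiset S}
    (h : AreCollinear (veroBlocks k L) m n) {x y : S} (hx : n.count x < m.count x)
    (hy : n.count y < m.count y) : x = y := by
  obtain ⟨_, ⟨r, e, B, -, -, -, -, rfl⟩, ⟨a, -, rfl⟩, b, -, rfl⟩ := h
  simp only [Multiset.count_add, Multiset.count_replicate] at hx hy
  grind

theorem hasClaw_veroBlocks (hL : Pairwise (AreCollinear L)) (hk : 3 ≤ k) {x y z : S} (hxy : x ≠ y)
    (hyz : y ≠ z) (hzx : z ≠ x) : HasClaw (veroBlocks k L) := by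
  classical
  set e := Multiset.replicate (k - 3) x
  have he {a b : S} : (a ::ₘ b ::ₘ e).card + 1 = k := by
    simp only [e, Multiset.card_cons, Multiset.card_replicate]
    omega
  have not_collinear {a b c : S} (hab : a ≠ b) (hbc : b ≠ c) (hca : c ≠ a) :
      ¬ AreCollinear (veroBlocks k L) (b ::ₘ a ::ₘ b ::ₘ e) (c ::ₘ b ::ₘ c ::ₘ e) := fun h => by
    refine hab (h.eq_of_count_lt_count ?_ ?_) <;> simp [hab, hbc, hab.symm, hca.symm]
  refine ⟨z ::ₘ x ::ₘ y ::ₘ e, y ::ₘ x ::ₘ y ::ₘ e, z ::ₘ y ::ₘ z ::ₘ e, x ::ₘ z ::ₘ x ::ₘ e,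
    (hL hyz.symm).cons he, ?_, ?_, not_collinear hxy hyz hzx, not_collinear hyz hzx hxy,
    not_collinear hzx hxy hyz⟩
  · rw [Multiset.cons_swap z x, Multiset.cons_swap z y]
    exact (hL hzx.symm).cons he
  · rw [Multiset.cons_swap x y, Multiset.cons_swap z y, Multiset.cons_swap z x,
      Multiset.cons_swap x z]
    exact (hL hxy.symm).cons he

theorem pairwise_areCollinear_veroBlocks_of_le_one (hL : Pairwise (AreCollinear L)) (hk : k ≤ 1) :
    (veroPoints S k).Pairwise (AreCollinear (veroBlocks k L)) := by
  intro m hm n hn hmn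
  rw [veroPoints, Set.mem_ofPred_eq] at hm hn
  obtain rfl | rfl := Nat.le_one_iff_eq_zero_or_eq_one.1 hk
  · rw [Multiset.card_eq_zero] at hm hn
    exact absurd (hm.trans hn.symm) hmn
  · obtain ⟨x, rfl⟩ := Multiset.card_eq_one.1 hm
    obtain ⟨y, rfl⟩ := Multiset.card_eq_one.1 hn
    exact (hL (by simpa using hmn)).cons rfl

theorem exists_count_lt_count_of_card_eq [DecidableEq S] {m n : Multiset S}
    (hcard : m.card = n.card) (hmn : m ≠ n) : ∃ x, n.count x < m.count x := by
  by_contra! h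
  exact hmn (Multiset.eq_of_le_of_card_le (Multiset.le_iff_count.2 h) hcard.ge)

theorem sub_eq_replicate_of_count_lt_count [DecidableEq S] {m n : Multiset S} {x : S}
    (hx : ∀ a, n.count a < m.count a → a = x) : m - n = Multiset.replicate (m - n).card x :=
  Multiset.eq_replicate_of_mem fun a ha => hx a <| by
    rwa [← Multiset.count_pos, Multiset.count_sub, Nat.sub_pos_iff_lt] at ha

theorem areCollinear_veroBlocks_of_count_lt_count [DecidableEq S] (hL : Pairwise (AreCollinear L))
    {m n : Multiset S} (hm : m ∈ veroPoints S k) (hn : n ∈ veroPoints S k) (hmn : m ≠ n) {x y : S}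
    (hxy : x ≠ y) (hx : ∀ a, n.count a < m.count a → a = x)
    (hy : ∀ a, m.count a < n.count a → a = y) : AreCollinear (veroBlocks k L) m n := by
  have hm_split : m ∩ n + (m - n) = m := by rw [add_comm, Multiset.sub_add_inter]
  have hn_split : m ∩ n + (n - m) = n := by
    rw [add_comm, Multiset.inter_comm, Multiset.sub_add_inter]
  have hm_card : (m ∩ n).card + (m - n).card = k := by rw [← Multiset.card_add, hm_split]; exact hm
  have hn_card : (m ∩ n).card + (n - m).card = k := by rw [← Multiset.card_add, hn_split]; exact hn
  have hcard : (n - m).card = (m - n).card := by omega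
  have hpos : 0 < (m - n).card := Multiset.card_pos.2 fun h => hmn <|
    Multiset.eq_of_le_of_card_le (tsub_eq_zero_iff_le.1 h) (Eq.trans hn hm.symm).le
  convert (hL hxy).add_replicate hpos hm_card using 1
  · rw [← sub_eq_replicate_of_count_lt_count hx, hm_split]
  · rw [← hcard, ← sub_eq_replicate_of_count_lt_count hy, hn_split]

theorem pairwise_areCollinear_veroBlocks_of_forall_eq_or_eq (hL : Pairwise (AreCollinear L))
    (hS : ∀ x y z : S, x ≠ y → z = x ∨ z = y) :
    (veroPoints S k).Pairwise (AreCollinear (veroBlocks k L)) := by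
  classical
  intro m hm n hn hmn
  have hcard : m.card = n.card := Eq.trans hm hn.symm
  obtain ⟨x, hx⟩ := exists_count_lt_count_of_card_eq hcard hmn
  obtain ⟨y, hy⟩ := exists_count_lt_count_of_card_eq hcard.symm hmn.symm
  have hxy : x ≠ y := by rintro rfl; exact hx.asymm hy
  refine areCollinear_veroBlocks_of_count_lt_count hL hm hn hmn hxy (fun a ha => ?_) fun a ha => ?_
  · exact (hS x y a hxy).resolve_right (by rintro rfl; exact ha.asymm hy)
  · exact (hS x y a hxy).resolve_left (by rintro rfl; exact ha.asymm hx)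

/-- The ends of the edge that represents `m ∈ 𝔶₂(S)` when `V₂` of a linear space on `S` is viewed as
the line graph of the complete graph on `S ∪ {∞}`: `x + y` is the edge `xy`, and `2 · x` is the edge
`x∞`, with `none` in the role of `∞`. -/
def veroEnds (m : Multiset S) : Set (Option S) :=
  {v | v.elim (¬ m.Nodup) (· ∈ m)}

theorem veroEnds_pair {x y : S} (hxy : x ≠ y) : veroEnds {x, y} = {some x, some y} := by
  ext (_ | v) <;> simp [veroEnds, hxy]

theorem veroEnds_pair_self (x : S) : veroEnds {x, x} = {some x, none} := by
  ext (_ | v) <;> simp [veroEnds]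

theorem encard_veroEnds {m : Multiset S} (hm : m ∈ veroPoints S 2) : (veroEnds m).encard = 2 := by
  obtain ⟨x, y, rfl⟩ := Multiset.card_eq_two.1 hm
  obtain rfl | hxy := eq_or_ne x y
  · rw [veroEnds_pair_self, Set.encard_pair (Option.some_ne_none x)]
  · rw [veroEnds_pair hxy, Set.encard_pair (Option.some_injective S |>.ne hxy)]

theorem exists_veroEnds_eq {v w : Option S} (hvw : v ≠ w) :
    ∃ m ∈ veroPoints S 2, veroEnds m = {v, w} := by
  rcases v with _ | x <;> rcases w with _ | y
  · exact absurd rfl hvw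
  · exact ⟨{y, y}, rfl, by rw [veroEnds_pair_self, Set.pair_comm]⟩
  · exact ⟨{x, x}, rfl, veroEnds_pair_self x⟩
  · exact ⟨{x, y}, rfl, veroEnds_pair (by simpa using hvw)⟩

theorem exists_veroEnds_eq_of_mem {m : Multiset S} (hm : m ∈ veroPoints S 2) {v : Option S}
    (hv : v ∈ veroEnds m) : ∃ w ≠ v, veroEnds m = {v, w} := by
  obtain ⟨a, b, hab, h⟩ := Set.encard_eq_two.1 (encard_veroEnds hm)
  rw [h] at hv ⊢
  obtain rfl | rfl := hv
  · exact ⟨b, hab.symm, rfl⟩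
  · exact ⟨a, hab, Set.pair_comm _ _⟩

theorem exists_eq_image_pair_of_mem_veroBlocks_two {l : Set (Multiset S)}
    (hl : l ∈ veroBlocks 2 L) :
    (∃ p, ∃ B ∈ L, l = (fun x => {p, x}) '' B) ∨ ∃ B ∈ L, l = (fun x => {x, x}) '' B := by
  obtain ⟨r, e, B, hr, hr2, he, hB, rfl⟩ := hl
  obtain rfl | rfl : r = 1 ∨ r = 2 := by omega
  · obtain ⟨p, rfl⟩ := Multiset.card_eq_one.1 he
    exact Or.inl ⟨p, B, hB, Set.ext fun m => exists_congr fun x => and_congr_right' eq_comm⟩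
  · obtain rfl := Multiset.card_eq_zero.1 he
    refine Or.inr ⟨B, hB, Set.ext fun m => exists_congr fun x => and_congr_right' ?_⟩
    rw [zero_add, eq_comm]
    rfl

theorem areCollinear_veroBlocks_two_iff (hL : ∀ x y, AreCollinear L x y) {m n : Multiset S}
    (hm : m ∈ veroPoints S 2) (hn : n ∈ veroPoints S 2) :
    AreCollinear (veroBlocks 2 L) m n ↔ ∃ v, v ∈ veroEnds m ∧ v ∈ veroEnds n := by
  constructor
  · rintro ⟨l, hl, hml, hnl⟩
    obtain ⟨p, B, -, rfl⟩ | ⟨B, -, rfl⟩ := exists_eq_image_pair_of_mem_veroBlocks_two hl <;>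
      obtain ⟨⟨x, -, rfl⟩, y, -, rfl⟩ := And.intro hml hnl
    · exact ⟨some p, by simp [veroEnds]⟩
    · exact ⟨none, by simp [veroEnds]⟩
  · rintro ⟨_ | p, hpm, hpn⟩
    · obtain ⟨x, y, rfl⟩ := Multiset.card_eq_two.1 hm
      obtain ⟨z, w, rfl⟩ := Multiset.card_eq_two.1 hn
      obtain rfl : x = y := by simpa [veroEnds] using hpm
      obtain rfl : z = w := by simpa [veroEnds] using hpn
      exact (hL x z).add_replicate (e := 0) two_pos rfl
    · obtain ⟨s, rfl⟩ := Multiset.exists_cons_of_mem hpm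
      obtain ⟨t, rfl⟩ := Multiset.exists_cons_of_mem hpn
      simp only [veroPoints, Set.mem_ofPred_eq, Multiset.card_cons, Nat.reduceEqDiff] at hm hn
      obtain ⟨x, rfl⟩ := Multiset.card_eq_one.1 hm
      obtain ⟨y, rfl⟩ := Multiset.card_eq_one.1 hn
      exact (hL x y).add_replicate (e := {p}) one_pos rfl

theorem commonNeighborsHaveOpposites_veroBlocks_two (hL : ∀ x y, AreCollinear L x y) :
    CommonNeighborsHaveOpposites (veroBlocks 2 L) := by
  intro m n p hmp hnp hmn
  have hm := sUnion_veroBlocks_subset hmp.left_mem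
  have hn := sUnion_veroBlocks_subset hnp.left_mem
  have hp := sUnion_veroBlocks_subset hmp.right_mem
  obtain ⟨v, hvm, hvp⟩ := (areCollinear_veroBlocks_two_iff hL hm hp).1 hmp
  obtain ⟨w, hwn, hwp⟩ := (areCollinear_veroBlocks_two_iff hL hn hp).1 hnp
  obtain ⟨v', hv', hm_ends⟩ := exists_veroEnds_eq_of_mem hm hvm
  obtain ⟨w', hw', hn_ends⟩ := exists_veroEnds_eq_of_mem hn hwn
  obtain ⟨u, hu, hp_ends⟩ := exists_veroEnds_eq_of_mem hp hvp
  rw [areCollinear_veroBlocks_two_iff hL hm hn, hm_ends, hn_ends] at hmn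
  obtain ⟨q, hq, hq_ends⟩ : ∃ q ∈ veroPoints S 2, veroEnds q = {v', w'} :=
    exists_veroEnds_eq (by grind)
  refine ⟨q, ?_, ?_, ?_⟩
  · exact (areCollinear_veroBlocks_two_iff hL hm hq).2 ⟨v', by simp [hm_ends], by simp [hq_ends]⟩
  · exact (areCollinear_veroBlocks_two_iff hL hn hq).2 ⟨w', by simp [hn_ends], by simp [hq_ends]⟩
  · rw [areCollinear_veroBlocks_two_iff hL hp hq, hp_ends, hq_ends]
    grind

theorem hasClaw_or_commonNeighborsHaveOpposites_veroBlocks (hL : Pairwise (AreCollinear L))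
    (k : ℕ) : HasClaw (veroBlocks k L) ∨ CommonNeighborsHaveOpposites (veroBlocks k L) := by
  by_cases hS : ∀ x y z : S, x ≠ y → z = x ∨ z = y
  · exact Or.inr (commonNeighborsHaveOpposites_of_pairwise sUnion_veroBlocks_subset
      (pairwise_areCollinear_veroBlocks_of_forall_eq_or_eq hL hS))
  push Not at hS
  obtain ⟨x, y, z, hxy, hzx, hzy⟩ := hS
  obtain hk | rfl | hk : k ≤ 1 ∨ k = 2 ∨ 3 ≤ k := by omega
  · exact Or.inr (commonNeighborsHaveOpposites_of_pairwise sUnion_veroBlocks_subset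
      (pairwise_areCollinear_veroBlocks_of_le_one hL hk))
  · have : Nontrivial S := ⟨x, y, hxy⟩
    exact Or.inr (commonNeighborsHaveOpposites_veroBlocks_two (AreCollinear.of_pairwise hL))
  · exact Or.inl (hasClaw_veroBlocks hL hk hxy hzy.symm hzx)

end Veronese

theorem pairwise_areCollinear_agLines (D W : Type*) [DivisionRing D] [AddCommGroup W] [Module D W] :
    Pairwise (AreCollinear (agLines D W)) :=
  fun x y hxy => ⟨_, ⟨x, y - x, sub_ne_zero.2 hxy.symm, rfl⟩, ⟨0, by simp⟩, ⟨1, by simp⟩⟩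

section ProjectiveLine

variable {K V : Type*} [DivisionRing K] [AddCommGroup V] [Module K V]

theorem finrank_sup_submodule {x y : ℙ K V} (hxy : x ≠ y) :
    Module.finrank K ↥(x.submodule ⊔ y.submodule) = 2 := by
  have hx : IsAtom x.submodule := Submodule.isAtom_iff_finrank_eq_one.2 x.finrank_submodule
  have hy : IsAtom y.submodule := Submodule.isAtom_iff_finrank_eq_one.2 y.finrank_submodule
  have hdisj : Disjoint x.submodule y.submodule :=
    hx.disjoint_of_ne hy fun h => hxy (submodule_injective h)
  rw [← add_zero (Module.finrank K _), ← finrank_bot K V, ← hdisj.eq_bot,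
    Submodule.finrank_sup_add_finrank_inf_eq, x.finrank_submodule, y.finrank_submodule]

theorem sup_submodule_eq {x y : ℙ K V} (hxy : x ≠ y) {W : Submodule K V}
    (hW : Module.finrank K W = 2) (hx : x.submodule ≤ W) (hy : y.submodule ≤ W) :
    x.submodule ⊔ y.submodule = W := by
  have : FiniteDimensional K W := Module.finite_of_finrank_pos (by omega)
  exact Submodule.eq_of_le_of_finrank_eq (sup_le hx hy) (by rw [finrank_sup_submodule hxy, hW])

theorem exists_submodule_le_ker {W : Submodule K V} (hW : 1 < Module.finrank K W)
    (f : V →ₗ[K] K) : ∃ x : ℙ K V, x.submodule ≤ W ∧ x.submodule ≤ LinearMap.ker f := by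
  have : FiniteDimensional K W := Module.finite_of_finrank_pos (by omega)
  obtain ⟨w, hw, hw0⟩ := Submodule.exists_mem_ne_zero_of_ne_bot
    ((f.domRestrict W).ker_ne_bot_of_finrank_lt (by simpa using hW))
  refine ⟨mk K (w : V) (by simpa using hw0), ?_, ?_⟩ <;>
    rw [submodule_mk, Submodule.span_singleton_le_iff_mem]
  · exact w.2
  · exact hw

theorem exists_ne_zero_map_eq_zero_of_finrank_lt_rank {M : Type*} [AddCommGroup M] [Module K M]
    [Module.Finite K M] (f : V →ₗ[K] M)
    (h : (Module.finrank K M : Cardinal) < Module.rank K V) : ∃ v ≠ 0, f v = 0 := by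
  by_contra! hf
  have hinj : Function.Injective f :=
    (injective_iff_map_eq_zero f).2 fun v => not_imp_not.1 (hf v)
  have hle := f.lift_rank_le_of_injective hinj
  rw [← Module.finrank_eq_rank K M, Cardinal.lift_natCast, Cardinal.lift_le_nat_iff] at hle
  exact h.not_ge hle

end ProjectiveLine

section Conjugate

variable {K V : Type*} [Field K] [AddCommGroup V] [Module K V]

theorem pairwise_areCollinear_projLines : Pairwise (AreCollinear (projLines K V)) :=
  fun x y hxy => ⟨_, ⟨x.submodule ⊔ y.submodule, finrank_sup_submodule hxy, rfl⟩,
    show x.submodule ≤ _ from le_sup_left, show y.submodule ≤ _ from le_sup_right⟩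

variable {ξ : V →ₗ[K] V →ₗ[K] K}

theorem mk_pair_mem_conjugatePairs_iff (halt : ξ.IsAlt) {u v : V} (hu : u ≠ 0) (hv : v ≠ 0) :
    {mk K u hu, mk K v hv} ∈ conjugatePairs ξ ↔ ξ u v = 0 := by
  constructor
  · rintro ⟨u', v', hu', hv', h0, h⟩
    obtain ⟨hu_eq, hv_eq⟩ | ⟨hu_eq, hv_eq⟩ := multiset_pair_eq_pair_iff_s14.1 h <;>
      obtain ⟨a, rfl⟩ := (mk_eq_mk_iff' K _ _ _ _).1 hu_eq <;>
      obtain ⟨b, rfl⟩ := (mk_eq_mk_iff' K _ _ _ _).1 hv_eq <;>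
      simp [h0, ← halt.neg u' v']
  · intro h
    exact ⟨u, v, hu, hv, h, rfl⟩

theorem pair_mem_conjugatePairs_iff (halt : ξ.IsAlt) {p x : ℙ K V} :
    {p, x} ∈ conjugatePairs ξ ↔ x.submodule ≤ LinearMap.ker (ξ p.rep) := by
  rw [submodule_eq, Submodule.span_singleton_le_iff_mem, LinearMap.mem_ker,
    ← mk_pair_mem_conjugatePairs_iff halt p.rep_nonzero x.rep_nonzero, mk_rep, mk_rep]

theorem pair_self_mem_conjugatePairs (halt : ξ.IsAlt) (p : ℙ K V) :
    {p, p} ∈ conjugatePairs ξ :=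
  ⟨p.rep, p.rep, p.rep_nonzero, p.rep_nonzero, halt _, by rw [mk_rep]⟩

theorem conjugatePairs_subset_veroPoints : conjugatePairs ξ ⊆ veroPoints (ℙ K V) 2 := by
  rintro _ ⟨u, v, hu, hv, -, rfl⟩
  rfl

theorem exists_apply_ne_zero (hξ : ξ ≠ 0) : ∃ u v, ξ u v ≠ 0 := by
  contrapose! hξ
  exact LinearMap.ext₂ hξ

theorem conjugatePairs_ne_veroPoints (halt : ξ.IsAlt) (hξ : ξ ≠ 0) :
    conjugatePairs ξ ≠ veroPoints (ℙ K V) 2 := by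
  obtain ⟨u, v, huv⟩ := exists_apply_ne_zero hξ
  have hu : u ≠ 0 := by rintro rfl; simp at huv
  have hv : v ≠ 0 := by rintro rfl; simp at huv
  intro h
  have hmem : {mk K u hu, mk K v hv} ∈ veroPoints (ℙ K V) 2 := rfl
  rw [← h, mk_pair_mem_conjugatePairs_iff halt] at hmem
  exact huv hmem

theorem isSubspace_conjugatePairs (halt : ξ.IsAlt) :
    IsSubspace (veroBlocks 2 (projLines K V)) (conjugatePairs ξ) := by
  rintro l hl ⟨_, ⟨hxl, hxH⟩, _, ⟨hyl, hyH⟩, hne⟩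
  obtain ⟨p, _, ⟨W, hW, rfl⟩, rfl⟩ | ⟨B, -, rfl⟩ := exists_eq_image_pair_of_mem_veroBlocks_two hl
  · obtain ⟨x, hx, rfl⟩ := hxl
    obtain ⟨y, hy, rfl⟩ := hyl
    have hxy : x ≠ y := by rintro rfl; exact hne rfl
    rw [pair_mem_conjugatePairs_iff halt] at hxH hyH
    rintro _ ⟨z, hz, rfl⟩
    rw [Set.mem_ofPred_eq, ← sup_submodule_eq hxy hW hx hy] at hz
    exact (pair_mem_conjugatePairs_iff halt).2 (hz.trans (sup_le hxH hyH))
  · rintro _ ⟨x, -, rfl⟩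
    exact pair_self_mem_conjugatePairs halt x

theorem inter_conjugatePairs_nonempty (halt : ξ.IsAlt) {l : Set (Multiset (ℙ K V))}
    (hl : l ∈ veroBlocks 2 (projLines K V)) : (l ∩ conjugatePairs ξ).Nonempty := by
  obtain ⟨p, _, ⟨W, hW, rfl⟩, rfl⟩ | ⟨_, ⟨W, hW, rfl⟩, rfl⟩ :=
    exists_eq_image_pair_of_mem_veroBlocks_two hl
  · obtain ⟨x, hxW, hx⟩ := exists_submodule_le_ker hW.ge (ξ p.rep)
    exact ⟨{p, x}, ⟨x, hxW, rfl⟩, (pair_mem_conjugatePairs_iff halt).2 hx⟩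
  · obtain ⟨x, hxW, -⟩ := exists_submodule_le_ker hW.ge 0
    exact ⟨{x, x}, ⟨x, hxW, rfl⟩, pair_self_mem_conjugatePairs halt x⟩

theorem isGeomHyperplane_conjugatePairs (halt : ξ.IsAlt) (hξ : ξ ≠ 0) :
    IsGeomHyperplane (veroPoints (ℙ K V) 2) (veroBlocks 2 (projLines K V)) (conjugatePairs ξ) :=
  ⟨conjugatePairs_subset_veroPoints, conjugatePairs_ne_veroPoints halt hξ,
    isSubspace_conjugatePairs halt, fun _ => inter_conjugatePairs_nonempty halt⟩

theorem nodup_of_notMem_conjugatePairs (halt : ξ.IsAlt) {m : Multiset (ℙ K V)}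
    (hm : m ∈ veroPoints (ℙ K V) 2 \ conjugatePairs ξ) : m.Nodup := by
  obtain ⟨x, y, rfl⟩ := Multiset.card_eq_two.1 hm.1
  have hxy : x ≠ y := by rintro rfl; exact hm.2 (pair_self_mem_conjugatePairs halt x)
  simpa using hxy

theorem areCollinear_reductLines_conjugatePairs_iff (halt : ξ.IsAlt) {m n : Multiset (ℙ K V)}
    (hm : m ∈ veroPoints (ℙ K V) 2 \ conjugatePairs ξ)
    (hn : n ∈ veroPoints (ℙ K V) 2 \ conjugatePairs ξ) :
    AreCollinear (reductLines (veroBlocks 2 (projLines K V)) (conjugatePairs ξ)) m n ↔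
      ∃ p, p ∈ m ∧ p ∈ n := by
  have hm_nodup := nodup_of_notMem_conjugatePairs halt hm
  have : Nontrivial (ℙ K V) := by
    obtain ⟨x, y, rfl⟩ := Multiset.card_eq_two.1 hm.1
    exact ⟨x, y, by simpa using hm_nodup⟩
  rw [areCollinear_reductLines_iff, and_iff_left ⟨hm.2, hn.2⟩, areCollinear_veroBlocks_two_iff
    (AreCollinear.of_pairwise pairwise_areCollinear_projLines) hm.1 hn.1, Option.exists]
  simp [veroEnds, hm_nodup]

theorem not_hasClaw_reductLines_conjugatePairs (halt : ξ.IsAlt) :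
    ¬ HasClaw (reductLines (veroBlocks 2 (projLines K V)) (conjugatePairs ξ)) := by
  rintro ⟨m, a, b, c, hma, hmb, hmc, hab, hbc, hca⟩
  have hm := sUnion_reductLines_subset sUnion_veroBlocks_subset hma.left_mem
  have ha := sUnion_reductLines_subset sUnion_veroBlocks_subset hma.right_mem
  have hb := sUnion_reductLines_subset sUnion_veroBlocks_subset hmb.right_mem
  have hc := sUnion_reductLines_subset sUnion_veroBlocks_subset hmc.right_mem
  simp only [areCollinear_reductLines_conjugatePairs_iff halt, hm, ha, hb, hc]
    at hma hmb hmc hab hbc hca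
  obtain ⟨x, y, rfl⟩ := Multiset.card_eq_two.1 hm.1
  simp only [Multiset.insert_eq_cons, Multiset.mem_cons, Multiset.mem_singleton] at hma hmb hmc
  -- Pigeonhole: two of `a`, `b`, `c` contain the same one of `x` and `y`.
  grind

theorem exists_conjugate_ends_of_path (hdim : 3 ≤ Module.rank K V) (halt : ξ.IsAlt) (hξ : ξ ≠ 0) :
    ∃ p x y q : ℙ K V, p ≠ q ∧ {p, q} ∈ conjugatePairs ξ ∧ {p, x} ∉ conjugatePairs ξ ∧
      {x, y} ∉ conjugatePairs ξ ∧ {q, y} ∉ conjugatePairs ξ := by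
  obtain ⟨u, v, huv⟩ := exists_apply_ne_zero hξ
  -- Any two of `u`, `v`, `u + v` are non-orthogonal, and adding a vector `z` orthogonal to all of
  -- them to `u` does not change this.
  obtain ⟨z, hz, huvz⟩ := exists_ne_zero_map_eq_zero_of_finrank_lt_rank ((ξ u).prod (ξ v))
    (hdim.trans_lt' (by norm_num))
  obtain ⟨huz, hvz⟩ : ξ u z = 0 ∧ ξ v z = 0 := Prod.ext_iff.1 huvz
  have hzu : ξ z u = 0 := by rw [← halt.neg, huz, neg_zero]
  have hzv : ξ z v = 0 := by rw [← halt.neg, hvz, neg_zero]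
  have hvu : ξ v u ≠ 0 := by rwa [← halt.neg, neg_ne_zero]
  have ne_zero {a b : V} (hab : ξ a b ≠ 0) : a ≠ 0 := by rintro rfl; simp at hab
  have hxy : ξ v (u + v) ≠ 0 := by simpa [halt v] using hvu
  have hqy : ξ (u + z) (u + v) ≠ 0 := by simpa [halt u, hzu, hzv] using huv
  have hyx : ξ (u + v) v ≠ 0 := by simpa [halt v] using huv
  refine ⟨mk K u (ne_zero huv), mk K v (ne_zero hvu), mk K (u + v) (ne_zero hyx),
    mk K (u + z) (ne_zero hqy), ?_, ?_, ?_, ?_, ?_⟩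
  · intro h
    obtain ⟨c, hc⟩ := (mk_eq_mk_iff' K _ _ _ _).1 h
    obtain rfl : c = 1 := by simpa [hvz, hvu] using congrArg (ξ v) hc
    exact hz (by simpa using hc)
  all_goals rw [mk_pair_mem_conjugatePairs_iff halt]
  · simp [halt u, huz]
  · exact huv
  · exact hxy
  · exact hqy

theorem not_commonNeighborsHaveOpposites_reductLines_conjugatePairs (hdim : 3 ≤ Module.rank K V)
    (halt : ξ.IsAlt) (hξ : ξ ≠ 0) : ¬ CommonNeighborsHaveOpposites
      (reductLines (veroBlocks 2 (projLines K V)) (conjugatePairs ξ)) := by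
  obtain ⟨p, x, y, q, hpq, hpqH, hpx, hxy, hqy⟩ := exists_conjugate_ends_of_path hdim halt hξ
  have hpy : p ≠ y := by rintro rfl; exact hqy (Multiset.pair_comm p q ▸ hpqH)
  have hxq : x ≠ q := by rintro rfl; exact hpx hpqH
  have hxy_ne : x ≠ y := by rintro rfl; exact hxy (pair_self_mem_conjugatePairs halt x)
  have collinear_iff {m n : Multiset (ℙ K V)} := areCollinear_reductLines_conjugatePairs_iff halt
    (m := m) (n := n)
  intro h
  obtain ⟨r, hpxr, hqyr, hxyr⟩ := h {p, x} {q, y} {x, y}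
    ((collinear_iff ⟨rfl, hpx⟩ ⟨rfl, hxy⟩).2 ⟨x, by simp⟩)
    ((collinear_iff ⟨rfl, hqy⟩ ⟨rfl, hxy⟩).2 ⟨y, by simp⟩)
    (by rw [collinear_iff ⟨rfl, hpx⟩ ⟨rfl, hqy⟩]; simp [hpq, hpy, hxq, hxy_ne])
  have hr := sUnion_reductLines_subset sUnion_veroBlocks_subset hpxr.right_mem
  rw [collinear_iff ⟨rfl, hpx⟩ hr] at hpxr
  rw [collinear_iff ⟨rfl, hqy⟩ hr] at hqyr
  rw [collinear_iff ⟨rfl, hxy⟩ hr] at hxyr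
  simp only [Multiset.insert_eq_cons, Multiset.mem_cons, Multiset.mem_singleton] at hpxr hqyr hxyr
  have hpr : p ∈ r := by grind
  have hqr : q ∈ r := by grind
  have hr_eq : {p, q} = r := Multiset.eq_of_le_of_card_le
    ((Multiset.le_iff_subset (by simpa using hpq)).2 (by simp [hpr, hqr])) hr.1.le
  exact hr.2 (hr_eq ▸ hpqH)

end Conjugate

theorem stmt_14_general {K V : Type*} [Field K] [AddCommGroup V] [Module K V]
    (hdim : 3 ≤ Module.rank K V) (ξ : V →ₗ[K] V →ₗ[K] K) (halt : ξ.IsAlt) (hξ : ξ ≠ 0) :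
    IsGeomHyperplane (veroPoints (ℙ K V) 2) (veroBlocks 2 (projLines K V)) (conjugatePairs ξ) ∧
    ∀ (S : Type*) (L : Set (Set S)), Pairwise (AreCollinear L) → ∀ k : ℕ,
      ¬ GeomIsomorphic (veroPoints (ℙ K V) 2 \ conjugatePairs ξ)
          (reductLines (veroBlocks 2 (projLines K V)) (conjugatePairs ξ))
          (veroPoints S k) (veroBlocks k L) := by
  refine ⟨isGeomHyperplane_conjugatePairs halt hξ, ?_⟩
  rintro S L hL k ⟨φ, hφ, hblocks⟩
  have hinj := hφ.injOn.mono (sUnion_reductLines_subset (H := conjugatePairs ξ)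
    (sUnion_veroBlocks_subset (L := projLines K V)))
  obtain h | h := hasClaw_or_commonNeighborsHaveOpposites_veroBlocks hL k <;> rw [← hblocks] at h
  · exact not_hasClaw_reductLines_conjugatePairs halt (h.of_image hinj)
  · exact not_commonNeighborsHaveOpposites_reductLines_conjugatePairs hdim halt hξ
      (h.of_image hinj)

theorem stmt_14 {K V : Type*} [Field K] [AddCommGroup V] [Module K V]
    (hchar : (2 : K) ≠ 0) (hdim : 3 ≤ Module.rank K V)
    (ξ : V →ₗ[K] V →ₗ[K] K) (halt : ξ.IsAlt) (hξ : ξ ≠ 0)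
    (H : Set (Multiset (Projectivization K V))) (hH : H = conjugatePairs ξ) :
    IsGeomHyperplane (veroPoints (Projectivization K V) 2) (veroBlocks 2 (projLines K V)) H ∧
    ∀ (D W : Type*) [DivisionRing D] [AddCommGroup W] [Module D W],
      3 ≤ Cardinal.mk D → ∀ k : ℕ,
      ¬ GeomIsomorphic
          (veroPoints (Projectivization K V) 2 \ H) (reductLines (veroBlocks 2 (projLines K V)) H)
          (veroPoints W k) (veroBlocks k (agLines D W)) := by
  subst hH
  obtain ⟨hyperplane, not_isomorphic⟩ := stmt_14_general hdim ξ halt hξ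
  exact ⟨hyperplane, fun D W _ _ _ _ => not_isomorphic W _ (pairwise_areCollinear_agLines D W)⟩
end
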